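/- arXiv:1403.3489 — 3 statements merged into one kernel-verified Lean document; each statement's English description precedes it below -/
import Mathlib

section
/- Let C ⊆ ℝ denote the ternary Cantor set and let α > 1 be a real number. Then C ∪ (C + α) is Lipschitz equivalent to C. -/
/-- Two subsets `X`, `Y` of (possibly different) metric spaces are Lipschitz
equivalent if there are a bijection `f : X → Y` and a constant `L ≥ 1` with
`L⁻¹ * dist x y ≤ dist (f x) (f y) ≤ L * dist x y` for all `x y ∈ X`. -/
def LipschitzEquivalent {E F : Type*} [MetricSpace E] [MetricSpace F]
    (X : Set E) (Y : Set F) : Prop :=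
  ∃ (f : X → Y) (L : ℝ), 1 ≤ L ∧ Function.Bijective f ∧
    ∀ x y : X, L⁻¹ * dist (x : E) (y : E) ≤ dist (f x : F) (f y : F) ∧
      dist (f x : F) (f y : F) ≤ L * dist (x : E) (y : E)

lemma aux7_bound {L d e : ℝ} (hL : 0 < L) (h1 : d ≤ L * e) (h2 : e ≤ L * d) :
    L⁻¹ * d ≤ e ∧ e ≤ L * d := by
  refine ⟨?_, h2⟩
  rw [inv_mul_le_iff₀ hL]
  exact h1

theorem stmt7 (α : ℝ) (hα : 1 < α) :
    LipschitzEquivalent (cantorSet ∪ (fun x => x + α) '' cantorSet) cantorSet := by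
  have hC := cantorSet_eq_union_halves
  have hI : ∀ x ∈ cantorSet, 0 ≤ x ∧ x ≤ 1 := fun x hx => cantorSet_subset_unitInterval hx
  have hl : ∀ x ∈ cantorSet, x / 3 ∈ cantorSet := by
    intro x hx
    rw [hC]
    exact Or.inl ⟨x, hx, rfl⟩
  have hr : ∀ x ∈ cantorSet, (2 + x) / 3 ∈ cantorSet := by
    intro x hx
    rw [hC]
    exact Or.inr ⟨x, hx, rfl⟩
  let g : ℝ → ℝ := fun x => if x ≤ 1 then x / 3 else (2 + (x - α)) / 3
  have g1 : ∀ x ∈ cantorSet, g x = x / 3 := fun x hx => if_pos (hI x hx).2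
  have g2 : ∀ x ∈ cantorSet, g (x + α) = (2 + x) / 3 := by
    intro x hx
    have := (hI x hx).1
    have h : ¬ (x + α ≤ 1) := by linarith
    simp [g, h]
  have hg : ∀ x ∈ cantorSet ∪ (fun x => x + α) '' cantorSet, g x ∈ cantorSet := by
    rintro x (hx | ⟨y, hy, rfl⟩)
    · rw [g1 x hx]; exact hl x hx
    · simp only [g2 y hy]; exact hr y hy
  set M : ℝ := (α - 1)⁻¹ with hM
  have hM0 : 0 < M := inv_pos.2 (by linarith)
  have hMα : M * (α - 1) = 1 := inv_mul_cancel₀ (by linarith)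
  set L : ℝ := 3 * (α + 1) + M with hLdef
  have hL3 : 3 ≤ L := by linarith
  have hbound : ∀ x ∈ cantorSet ∪ (fun x => x + α) '' cantorSet,
      ∀ y ∈ cantorSet ∪ (fun x => x + α) '' cantorSet,
      L⁻¹ * |x - y| ≤ |g x - g y| ∧ |g x - g y| ≤ L * |x - y| := by
    have cross : ∀ x ∈ cantorSet, ∀ y ∈ cantorSet,
        L⁻¹ * |(y + α) - x| ≤ |(2 + y) / 3 - x / 3| ∧
          |(2 + y) / 3 - x / 3| ≤ L * |(y + α) - x| := by
      intro x hx y hy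
      obtain ⟨a, b⟩ := hI x hx
      obtain ⟨c, d⟩ := hI y hy
      rw [abs_of_pos (by linarith : 0 < y + α - x), abs_of_pos (by linarith)]
      apply aux7_bound (by linarith)
      · have : L * (1 / 3) ≤ L * ((2 + y) / 3 - x / 3) :=
          mul_le_mul_of_nonneg_left (by linarith) (by linarith)
        linarith
      · have h1 : L * (α - 1) ≤ L * (y + α - x) :=
          mul_le_mul_of_nonneg_left (by linarith) (by linarith)
        have h2 : M * (α - 1) ≤ L * (α - 1) :=
          mul_le_mul_of_nonneg_right (by linarith) (by linarith)
        linarith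
    have same : ∀ t : ℝ, L⁻¹ * |t| ≤ |t / 3| ∧ |t / 3| ≤ L * |t| := by
      intro t
      have ht := abs_nonneg t
      rw [abs_div, abs_of_pos (by norm_num : (0 : ℝ) < 3)]
      apply aux7_bound (by linarith) <;> nlinarith
    rintro x (hx | ⟨x, hx, rfl⟩) y (hy | ⟨y, hy, rfl⟩)
    · rw [g1 x hx, g1 y hy, ← sub_div]; exact same _
    · simp only [g1 x hx, g2 y hy]
      rw [abs_sub_comm x, abs_sub_comm (x / 3)]
      exact cross x hx y hy
    · simp only [g2 x hx, g1 y hy]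
      exact cross y hy x hx
    · simp only [g2 x hx, g2 y hy]
      have := same (x - y)
      rwa [show (2 + x) / 3 - (2 + y) / 3 = (x - y) / 3 by ring,
        show x + α - (y + α) = x - y by ring]
  refine ⟨fun x => ⟨g x, hg x x.2⟩, L, by linarith, ⟨?_, ?_⟩, ?_⟩
  · intro x y hxy
    have hxy' : g x = g y := congrArg Subtype.val hxy
    have h := (hbound x x.2 y y.2).1
    rw [hxy', sub_self, abs_zero, inv_mul_le_iff₀ (by linarith), mul_zero] at h
    exact Subtype.ext (sub_eq_zero.1 (abs_nonpos_iff.1 h))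
  · rintro ⟨z, hz⟩
    have hz' := hz
    rw [hC] at hz'
    rcases hz' with ⟨y, hy, rfl⟩ | ⟨y, hy, rfl⟩
    · exact ⟨⟨y, Or.inl hy⟩, Subtype.ext (g1 y hy)⟩
    · exact ⟨⟨y + α, Or.inr ⟨y, hy, rfl⟩⟩, Subtype.ext (g2 y hy)⟩
  · intro x y
    simp only [Real.dist_eq]
    exact hbound x x.2 y y.2
end

section
/- Let C ⊆ ℝ denote the ternary Cantor set and let α be a rational number with 0 < α ≤ 1. Then C ∪ (C + α) is Lipschitz equivalent to C. -/
namespace CantorUnion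

def Good (X : Set ℝ) : Prop :=
  ∃ (G : ℕ → Set ℝ → Prop) (c d : ℝ), 0 < c ∧ 0 < d ∧ G 0 X ∧ ∀ n Y, G n Y →
    Y.Nonempty ∧ IsCompact Y ∧ (∀ x ∈ Y, ∀ y ∈ Y, |x - y| ≤ c / 3 ^ n) ∧
    ∃ Y0 Y1, G (n+1) Y0 ∧ G (n+1) Y1 ∧ Y = Y0 ∪ Y1 ∧ ∀ x ∈ Y0, ∀ y ∈ Y1, d / 3 ^ n ≤ |x - y|

lemma Good.coding {X : Set ℝ} (h : Good X) : ∃ f : (ℕ → Bool) → ℝ, Set.range f = X ∧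
    ∃ c d : ℝ, 0 < c ∧ 0 < d ∧ ∀ u v n, (∀ i < n, u i = v i) → u n ≠ v n →
      d / 3 ^ n ≤ |f u - f v| ∧ |f u - f v| ≤ c / 3 ^ n := by
  classical
  obtain ⟨G, c, d, hc, hd, hX, hG⟩ := h
  have hs : ∀ n Y, ∃ S : Bool → Set ℝ, G n Y → (∀ b, G (n+1) (S b)) ∧ Y = S false ∪ S true ∧
      ∀ x ∈ S false, ∀ y ∈ S true, d / 3 ^ n ≤ |x - y| := by
    intro n Y
    by_cases hY : G n Y
    · obtain ⟨-, -, -, Y0, Y1, h0, h1, h2, h3⟩ := hG n Y hY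
      refine ⟨fun b => if b then Y1 else Y0, fun _ => ⟨?_, ?_, ?_⟩⟩
      · intro b; cases b <;> simpa
      · simpa using h2
      · simpa using h3
    · exact ⟨fun _ => ∅, fun h => absurd h hY⟩
  choose S hS using hs
  let T : (ℕ → Bool) → ℕ → Set ℝ := fun u n => Nat.rec X (fun n Y => S n Y (u n)) n
  have T0 : ∀ u, T u 0 = X := fun u => rfl
  have Ts : ∀ u n, T u (n+1) = S n (T u n) (u n) := fun u n => rfl
  have TG : ∀ u n, G n (T u n) := by
    intro u n
    induction n with
    | zero => exact hX
    | succ n ih => rw [Ts]; exact (hS n _ ih).1 _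
  have Tanti : ∀ u n, T u (n+1) ⊆ T u n := by
    intro u n
    have h2 := (hS n _ (TG u n)).2.1
    rw [Ts]
    conv_rhs => rw [h2]
    cases u n
    · exact Set.subset_union_left
    · exact Set.subset_union_right
  have hne : ∀ u, (⋂ n, T u n).Nonempty := by
    intro u
    apply IsCompact.nonempty_iInter_of_sequence_nonempty_isCompact_isClosed
    · exact Tanti u
    · exact fun n => (hG n _ (TG u n)).1
    · exact (hG 0 _ (TG u 0)).2.1
    · exact fun n => (hG n _ (TG u n)).2.1.isClosed
  choose f hf using hne
  have hf : ∀ u n, f u ∈ T u n := fun u n => Set.mem_iInter.1 (hf u) n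
  have hagree : ∀ u v n, (∀ i < n, u i = v i) → T u n = T v n := by
    intro u v n
    induction n with
    | zero => intro _; rfl
    | succ n ih =>
      intro h
      rw [Ts, Ts, ih (fun i hi => h i (by omega)), h n (by omega)]
  have key : ∀ u v n, (∀ i < n, u i = v i) → u n ≠ v n →
      d / 3 ^ n ≤ |f u - f v| ∧ |f u - f v| ≤ c / 3 ^ n := by
    intro u v n h hn
    have e := hagree u v n h
    refine ⟨?_, (hG n _ (TG u n)).2.2.1 _ (hf u n) _ (by rw [e]; exact hf v n)⟩
    have a := hf u (n+1)
    have b := hf v (n+1)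
    rw [Ts] at a b
    rw [← e] at b
    have h3 := (hS n _ (TG u n)).2.2
    cases hu : u n <;> cases hv : v n
    · simp [hu, hv] at hn
    · rw [hu] at a; rw [hv] at b; exact h3 _ a _ b
    · rw [hu] at a; rw [hv] at b; rw [abs_sub_comm]; exact h3 _ b _ a
    · simp [hu, hv] at hn
  refine ⟨f, ?_, c, d, hc, hd, key⟩
  apply Set.Subset.antisymm
  · rintro _ ⟨u, rfl⟩; exact hf u 0
  · intro x hx
    let b : ℕ → Set ℝ → Bool := fun n Y => if x ∈ S n Y false then false else true
    let R : ℕ → Set ℝ := fun n => Nat.rec X (fun n Y => S n Y (b n Y)) n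
    have Rs : ∀ n, R (n+1) = S n (R n) (b n (R n)) := fun n => rfl
    let u : ℕ → Bool := fun n => b n (R n)
    have hR : ∀ n, T u n = R n := by
      intro n
      induction n with
      | zero => rfl
      | succ n ih => rw [Ts, Rs, ih]
    have hxR : ∀ n, x ∈ T u n := by
      intro n
      induction n with
      | zero => exact hx
      | succ n ih =>
        have h2 := (hS n _ (TG u n)).2.1
        rw [h2] at ih
        rw [Ts]
        have hu : u n = if x ∈ S n (T u n) false then false else true := by
          rw [hR]
        rw [hu]
        split_ifs with h
        · exact h
        · exact ih.resolve_left h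
    refine ⟨u, ?_⟩
    by_contra hne
    have hpos : 0 < |f u - x| := abs_pos.2 (sub_ne_zero.2 hne)
    have hlim : Filter.Tendsto (fun n : ℕ => c / (3:ℝ) ^ n) Filter.atTop (nhds 0) :=
      Filter.Tendsto.div_atTop tendsto_const_nhds (tendsto_pow_atTop_atTop_of_one_lt (by norm_num))
    obtain ⟨n, hn⟩ := (hlim.eventually (gt_mem_nhds hpos)).exists
    have := (hG n _ (TG u n)).2.2.1 _ (hf u n) _ (hxR n)
    linarith

lemma Good.equiv {X Y : Set ℝ} (hX : Good X) (hY : Good Y) : LipschitzEquivalent X Y := by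
  classical
  obtain ⟨f, rfl, c, d, hc, hd, hf⟩ := hX.coding
  obtain ⟨g, rfl, c', d', hc', hd', hg⟩ := hY.coding
  have first : ∀ u v : ℕ → Bool, u ≠ v → ∃ n, (∀ i < n, u i = v i) ∧ u n ≠ v n := by
    intro u v h
    have h' : ∃ n, u n ≠ v n := Function.ne_iff.1 h
    exact ⟨Nat.find h', fun i hi => not_not.1 (Nat.find_min h' hi), Nat.find_spec h'⟩
  have inj : ∀ (f : (ℕ → Bool) → ℝ) (c d : ℝ), 0 < d → (∀ u v n, (∀ i < n, u i = v i) → u n ≠ v n →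
      d / 3 ^ n ≤ |f u - f v| ∧ |f u - f v| ≤ c / 3 ^ n) → Function.Injective f := by
    intro f c d hd hf u v huv
    by_contra hne
    obtain ⟨n, h1, h2⟩ := first u v hne
    have := (hf u v n h1 h2).1
    rw [huv, sub_self, abs_zero] at this
    have : 0 < d / 3 ^ n := by positivity
    linarith
  have fi := inj f c d hd hf
  have gi := inj g c' d' hd' hg
  let e := (Equiv.ofInjective f fi).symm.trans (Equiv.ofInjective g gi)
  have he : ∀ u, e ⟨f u, u, rfl⟩ = ⟨g u, u, rfl⟩ := by
    intro u
    have : (Equiv.ofInjective f fi).symm ⟨f u, u, rfl⟩ = u := by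
      rw [Equiv.symm_apply_eq]; rfl
    simp only [e, Equiv.trans_apply, this]; rfl
  have bd : ∀ (n : ℕ) (L c d a b : ℝ), 0 < d → c / d ≤ L → d / 3 ^ n ≤ a → b ≤ c / 3 ^ n → 1 ≤ L →
      b ≤ L * a := by
    intro n L c d a b hd hL ha hb h1
    calc b ≤ c / 3 ^ n := hb
      _ = c / d * (d / 3 ^ n) := by field_simp
      _ ≤ L * a := by
        apply mul_le_mul hL ha (by positivity) (by linarith)
  have hL1 : (1:ℝ) ≤ max 1 (max (c' / d) (c / d')) := le_max_left _ _
  have hL2 : c' / d ≤ max 1 (max (c' / d) (c / d')) := (le_max_left _ _).trans (le_max_right _ _)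
  have hL3 : c / d' ≤ max 1 (max (c' / d) (c / d')) := (le_max_right _ _).trans (le_max_right _ _)
  generalize max 1 (max (c' / d) (c / d')) = L at hL1 hL2 hL3
  refine ⟨e, L, hL1, e.bijective, ?_⟩
  rintro ⟨_, u, rfl⟩ ⟨_, v, rfl⟩
  rw [he, he]
  simp only [Real.dist_eq]
  by_cases huv : u = v
  · subst huv; simp
  obtain ⟨n, h1, h2⟩ := first u v huv
  obtain ⟨a1, a2⟩ := hf u v n h1 h2
  obtain ⟨b1, b2⟩ := hg u v n h1 h2
  constructor
  · rw [inv_mul_le_iff₀ (by linarith)]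
    exact bd n L c d' _ _ hd' hL3 b1 a2 hL1
  · exact bd n L c' d _ _ hd hL2 a1 b2 hL1

lemma Good.union {X Y : Set ℝ} (hX : Good X) (hY : Good Y) (δ : ℝ) (hδ : 0 < δ)
    (h : ∀ x ∈ X, ∀ y ∈ Y, δ ≤ |x - y|) : Good (X ∪ Y) := by
  obtain ⟨G, c, d, hc, hd, hX, hG⟩ := hX
  obtain ⟨G', c', d', hc', hd', hY, hG'⟩ := hY
  have hcX := (hG _ _ hX)
  have hcY := (hG' _ _ hY)
  have hcp : IsCompact (X ∪ Y) := hcX.2.1.union hcY.2.1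
  obtain ⟨B, hB⟩ := Metric.isBounded_iff.1 hcp.isBounded
  let c0 := max (|B| + 1) (max (3 * c) (3 * c'))
  let d0 := min δ (min (3 * d) (3 * d'))
  have e1 : |B| + 1 ≤ c0 := le_max_left _ _
  have e2 : 3 * c ≤ c0 := (le_max_left _ _).trans (le_max_right _ _)
  have e3 : 3 * c' ≤ c0 := (le_max_right _ _).trans (le_max_right _ _)
  have f1 : d0 ≤ δ := min_le_left _ _
  have f2 : d0 ≤ 3 * d := (min_le_right _ _).trans (min_le_left _ _)
  have f3 : d0 ≤ 3 * d' := (min_le_right _ _).trans (min_le_right _ _)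
  have hd0 : 0 < d0 := by simp only [d0, lt_min_iff]; refine ⟨hδ, by linarith, by linarith⟩
  have hc0 : 0 < c0 := by linarith [abs_nonneg B]
  have sc : ∀ (n : ℕ) (a b : ℝ), 3 * a ≤ b → a / 3 ^ n ≤ b / 3 ^ (n+1) := by
    intro n a b hab
    rw [pow_succ, div_le_div_iff₀ (by positivity) (by positivity)]
    nlinarith [pow_pos (show (0:ℝ) < 3 by norm_num) n]
  have sc' : ∀ (n : ℕ) (a b : ℝ), b ≤ 3 * a → b / 3 ^ (n+1) ≤ a / 3 ^ n := by
    intro n a b hab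
    rw [pow_succ, div_le_div_iff₀ (by positivity) (by positivity)]
    nlinarith [pow_pos (show (0:ℝ) < 3 by norm_num) n]
  refine ⟨fun n Z => match n with
    | 0 => Z = X ∪ Y
    | n+1 => G n Z ∨ G' n Z, c0, d0, hc0, hd0, rfl, ?_⟩
  intro n Z hZ
  match n with
  | 0 =>
    have hZ : Z = X ∪ Y := hZ
    subst hZ
    refine ⟨hcX.1.inl, hcp, ?_, X, Y, Or.inl hX, Or.inr hY, rfl, ?_⟩
    · intro x hx y hy
      have := hB hx hy
      rw [Real.dist_eq] at this
      simp only [pow_zero, div_one]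
      linarith [le_abs_self B]
    · intro x hx y hy
      have := h x hx y hy
      simp only [pow_zero, div_one]
      linarith
  | n+1 =>
    have hZ : G n Z ∨ G' n Z := hZ
    rcases hZ with hZ | hZ
    · obtain ⟨h1, h2, h3, Y0, Y1, h4, h5, h6, h7⟩ := hG _ _ hZ
      exact ⟨h1, h2, fun x hx y hy => (h3 x hx y hy).trans (sc _ _ _ e2), Y0, Y1, Or.inl h4,
        Or.inl h5, h6, fun x hx y hy => (sc' _ _ _ f2).trans (h7 x hx y hy)⟩
    · obtain ⟨h1, h2, h3, Y0, Y1, h4, h5, h6, h7⟩ := hG' _ _ hZ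
      exact ⟨h1, h2, fun x hx y hy => (h3 x hx y hy).trans (sc _ _ _ e3), Y0, Y1, Or.inr h4,
        Or.inr h5, h6, fun x hx y hy => (sc' _ _ _ f3).trans (h7 x hx y hy)⟩

/-- scaled and translated copy of the Cantor set -/
def P (r a : ℝ) : Set ℝ := (fun x => r * x + a) '' cantorSet

def Q (r a t : ℝ) : Set ℝ := P r a ∪ P r (a + r * t)

lemma P_compact (r a : ℝ) : IsCompact (P r a) :=
  isCompact_cantorSet.image (by fun_prop)

lemma P_nonempty (r a : ℝ) : (P r a).Nonempty := ⟨_, 0, zero_mem_cantorSet, rfl⟩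

lemma P_bd {r a x : ℝ} (hr : 0 < r) (hx : x ∈ P r a) : a ≤ x ∧ x ≤ a + r := by
  obtain ⟨y, hy, rfl⟩ := hx
  obtain ⟨h0, h1⟩ := cantorSet_subset_unitInterval hy
  constructor <;> simp only <;> nlinarith

lemma P_split (r a : ℝ) : P r a = P (r / 3) a ∪ P (r / 3) (a + 2 * (r / 3)) := by
  unfold P
  conv_lhs => rw [cantorSet_eq_union_halves]
  rw [Set.image_union, Set.image_image, Set.image_image]
  congr 1 <;> apply Set.image_congr <;> intro x _ <;> ring

lemma Q_split (r a t : ℝ) : Q r a t = P (r/3) a ∪ P (r/3) (a + r/3 * 2) ∪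
    (P (r/3) (a + r/3 * (3 * t)) ∪ P (r/3) (a + r/3 * (3 * t + 2))) := by
  unfold Q
  rw [P_split r a, P_split r (a + r * t)]
  congr! 3 <;> ring

lemma Q_split1 (r a t : ℝ) : Q r a t = Q (r/3) a (3*t) ∪ Q (r/3) (a + r/3 * 2) (3*t) := by
  rw [Q_split]
  unfold Q
  rw [Set.union_union_union_comm]
  congr! 3; ring

lemma Q_split2 (r a t : ℝ) : Q r a t = Q (r/3) a (3*t+2) ∪ Q (r/3) (a + r/3 * (3*t)) (2-3*t) := by
  rw [Q_split]
  unfold Q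
  rw [show a + r / 3 * (3*t) + r / 3 * (2 - 3 * t) = a + r/3*2 by ring]
  ext x; simp only [Set.mem_union]; tauto

lemma Q_split3 (r a t : ℝ) : Q r a t = Q (r/3) a (3*t+2) ∪ Q (r/3) (a + r/3 * 2) (3*t-2) := by
  rw [Q_split]
  unfold Q
  rw [show a + r / 3 * 2 + r / 3 * (3 * t - 2) = a + r/3*(3*t) by ring]
  ext x; simp only [Set.mem_union]; tauto

/-- separation of two Q's, side by side -/
lemma Q_sep1 {r a t : ℝ} (hr : 0 < r) (ht : 0 ≤ t) {x y : ℝ} (hx : x ∈ Q r a t)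
    (hy : y ∈ Q r (a + r * 2) t) : r * (1 - t) ≤ |x - y| := by
  have : x ≤ a + r * t + r := by
    rcases hx with hx | hx <;> have := P_bd hr hx <;> nlinarith
  have : a + r * 2 ≤ y := by
    rcases hy with hy | hy <;> have := P_bd hr hy <;> nlinarith
  rw [abs_sub_comm]
  refine le_trans ?_ (le_abs_self _)
  nlinarith

/-- separation, nested -/
lemma Q_sep2 {r a b D t m : ℝ} (hr : 0 < r) (ht : 0 ≤ t) (h1 : 1 + m ≤ b) (h2 : b + t + 1 + m ≤ D)
    {x y : ℝ} (hx : x ∈ Q r a D)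
    (hy : y ∈ Q r (a + r * b) t) : r * m ≤ |x - y| := by
  have : y ≤ a + r * b + r * t + r := by
    rcases hy with hy | hy <;> have := P_bd hr hy <;> nlinarith
  have : a + r * b ≤ y := by
    rcases hy with hy | hy <;> have := P_bd hr hy <;> nlinarith
  rcases hx with hx | hx
  · have := P_bd hr hx
    rw [abs_sub_comm]
    refine le_trans ?_ (le_abs_self _)
    nlinarith
  · have := P_bd hr hx
    refine le_trans ?_ (le_abs_self _)
    nlinarith

lemma P_sep {r a b m : ℝ} (hr : 0 < r) (h : 1 + m ≤ b) {x y : ℝ} (hx : x ∈ P r a)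
    (hy : y ∈ P r (a + r * b)) : r * m ≤ |x - y| := by
  have := P_bd hr hx
  have := P_bd hr hy
  rw [abs_sub_comm]
  refine le_trans ?_ (le_abs_self _)
  nlinarith

lemma Good_P (r a : ℝ) (hr : 0 < r) : Good (P r a) := by
  refine ⟨fun n Y => ∃ a, Y = P (r / 3 ^ n) a, r, r / 3, hr, by positivity, ⟨a, by simp⟩, ?_⟩
  rintro n _ ⟨a, rfl⟩
  have hρ : 0 < r / 3 ^ n := by positivity
  have e : r / 3 ^ (n+1) = r / 3 ^ n / 3 := by rw [pow_succ]; field_simp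
  have e' : r / 3 / 3 ^ n = r / 3 ^ n / 3 := by field_simp
  simp only [e, e']
  generalize r / 3 ^ n = ρ at *
  refine ⟨P_nonempty _ _, P_compact _ _, ?_, P (ρ/3) a, P (ρ/3) (a + 2 * (ρ/3)), ⟨_, rfl⟩, ⟨_, rfl⟩,
    P_split _ _, ?_⟩
  · intro x hx y hy
    have := P_bd hρ hx
    have := P_bd hρ hy
    rw [abs_le]; constructor <;> linarith
  · intro x hx y hy
    have := P_sep (m := 1) (b := 2) (by positivity) (by norm_num) hx (by rw [mul_comm]; exact hy)
    linarith

lemma Good_Q_coprime (q : ℕ) (hq : 0 < q) (h3 : ¬ 3 ∣ q) (r a t : ℝ) (hr : 0 < r) (ht0 : 0 < t)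
    (ht1 : t ≤ 1) (p : ℤ) (hp : q * t = p) : Good (Q r a t) := by
  have hq' : (1:ℝ) ≤ q := by exact_mod_cast hq
  refine ⟨fun n Y => ∃ a, Y = P (3 * (r / 3 ^ n)) a ∨ (∃ d : ℝ, 3 ≤ d ∧ d ≤ 5 ∧ Y = Q (r / 3 ^ n) a d) ∨
    ∃ t : ℝ, 0 < t ∧ t ≤ 1 ∧ (∃ p : ℤ, q * t = p) ∧ Y = Q (r / 3 ^ n) a t, 6 * r, r / 3 * (1 / q),
    by positivity, by positivity, ⟨a, Or.inr (Or.inr ⟨t, ht0, ht1, ⟨p, hp⟩, by simp⟩)⟩, ?_⟩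
  intro n Y hY
  have hρ : 0 < r / 3 ^ n := by positivity
  have e : r / 3 ^ (n+1) = r / 3 ^ n / 3 := by rw [pow_succ]; field_simp
  have e' : r / 3 * (1 / q) / 3 ^ n = r / 3 ^ n / 3 * (1 / q) := by field_simp
  have e'' : 6 * r / 3 ^ n = 6 * (r / 3 ^ n) := by ring
  rw [e', e'']
  simp only [e]
  generalize r / 3 ^ n = ρ at *
  clear ht0 ht1 hp p t e e' e'' a
  have h1q : (1:ℝ) / q ≤ 1 := by rw [div_le_one (by linarith)]; exact hq'
  have h0q : (0:ℝ) < 1 / q := by positivity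
  have hsm : ρ / 3 * (1 / q) ≤ ρ := by nlinarith
  have e3 : 3 * (ρ / 3) = ρ := by ring
  have diamQ : ∀ a t, 0 ≤ t → t ≤ 5 → ∀ x ∈ Q ρ a t, ∀ y ∈ Q ρ a t, |x - y| ≤ 6 * ρ := by
    intro a t h0 h1 x hx y hy
    have aux : ∀ x ∈ Q ρ a t, a ≤ x ∧ x ≤ a + 6 * ρ := by
      intro x hx
      rcases hx with hx | hx <;> have := P_bd hρ hx <;> constructor <;> nlinarith
    have := aux x hx
    have := aux y hy
    rw [abs_le]; constructor <;> linarith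
  have gap : ∀ s : ℝ, (∃ p : ℤ, q * s = p) → 0 < s → 1 / q ≤ s := by
    rintro s ⟨p, hp⟩ hs
    have h : (0:ℝ) < p := by rw [← hp]; positivity
    have h : (1:ℝ) ≤ p := by exact_mod_cast h
    rw [div_le_iff₀ (by linarith)]; linarith
  obtain ⟨a, rfl | ⟨d, hd3, hd5, rfl⟩ | ⟨t, ht0, ht1, ⟨p, hp⟩, rfl⟩⟩ := hY
  · refine ⟨P_nonempty _ _, P_compact _ _, ?_, P ρ a, P ρ (a + ρ * 2), ⟨a, Or.inl (by rw [e3])⟩,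
      ⟨_, Or.inl (by rw [e3])⟩, ?_, ?_⟩
    · intro x hx y hy
      have := P_bd (by positivity) hx
      have := P_bd (by positivity) hy
      rw [abs_le]; constructor <;> linarith
    · rw [P_split]; congr! 2 <;> ring
    · intro x hx y hy
      have := P_sep (m := 1) hρ (by norm_num) hx hy
      linarith
  · refine ⟨(P_nonempty _ _).inl, (P_compact _ _).union (P_compact _ _),
      diamQ _ _ (by linarith) (by linarith), P ρ a, P ρ (a + ρ * d), ⟨a, Or.inl (by rw [e3])⟩,
      ⟨_, Or.inl (by rw [e3])⟩, rfl, ?_⟩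
    intro x hx y hy
    have := P_sep (m := 1) hρ (by linarith) hx hy
    linarith
  · refine ⟨(P_nonempty _ _).inl, (P_compact _ _).union (P_compact _ _),
      diamQ _ _ (by linarith) (by linarith), ?_⟩
    have hρ3 : 0 < ρ / 3 := by positivity
    have ne1 : 3 * t ≠ 1 := by
      intro h
      have : (q:ℝ) = 3 * p := by rw [← hp]; linear_combination (-(q:ℝ)) * h
      have : (q:ℤ) = 3 * p := by exact_mod_cast this
      omega
    have ne2 : 3 * t ≠ 2 := by
      intro h
      have : (2:ℝ) * q = 3 * p := by rw [← hp]; linear_combination (-(q:ℝ)) * h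
      have : (2:ℤ) * q = 3 * p := by exact_mod_cast this
      omega
    rcases lt_or_gt_of_ne ne1 with h1 | h1
    · refine ⟨_, _, ⟨_, Or.inr (Or.inr ⟨3*t, by linarith, by linarith, ⟨3*p, ?_⟩, rfl⟩)⟩,
        ⟨_, Or.inr (Or.inr ⟨3*t, by linarith, by linarith, ⟨3*p, ?_⟩, rfl⟩)⟩, Q_split1 ρ a t, ?_⟩
      · push_cast; rw [← hp]; ring
      · push_cast; rw [← hp]; ring
      · intro x hx y hy
        refine le_trans ?_ (Q_sep1 hρ3 (by linarith) hx hy)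
        have := gap (1 - 3 * t) ⟨q - 3 * p, by push_cast; rw [← hp]; ring⟩ (by linarith)
        gcongr
    rcases lt_or_gt_of_ne ne2 with h2 | h2
    · refine ⟨_, _, ⟨_, Or.inr (Or.inl ⟨3*t+2, by linarith, by linarith, rfl⟩)⟩,
        ⟨_, Or.inr (Or.inr ⟨2-3*t, by linarith, by linarith, ⟨2*q-3*p, ?_⟩, rfl⟩)⟩, Q_split2 ρ a t, ?_⟩
      · push_cast; rw [← hp]; ring
      · intro x hx y hy
        have := gap (3 * t - 1) ⟨3 * p - q, by push_cast; rw [← hp]; ring⟩ (by linarith)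
        exact Q_sep2 hρ3 (by linarith) (by linarith) (by linarith) hx hy
    · refine ⟨_, _, ⟨_, Or.inr (Or.inl ⟨3*t+2, by linarith, by linarith, rfl⟩)⟩,
        ⟨_, Or.inr (Or.inr ⟨3*t-2, by linarith, by linarith, ⟨3*p-2*q, ?_⟩, rfl⟩)⟩, Q_split3 ρ a t, ?_⟩
      · push_cast; rw [← hp]; ring
      · intro x hx y hy
        exact Q_sep2 hρ3 (by linarith) (by linarith) (by linarith) hx hy

lemma Good_Q_far (r a d : ℝ) (hr : 0 < r) (hd : 1 < d) : Good (Q r a d) :=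
  (Good_P r a hr).union (Good_P r _ hr) (r * (d - 1)) (mul_pos hr (by linarith))
    (fun _ hx _ hy => P_sep hr (by linarith) hx hy)

lemma Good_Q (q : ℕ) (hq : 0 < q) (h3 : ¬ 3 ∣ q) (k : ℕ) : ∀ (r a t : ℝ), 0 < r → 0 < t →
    t ≤ 1 → (∃ p : ℤ, 3 ^ k * q * t = p) → Good (Q r a t) := by
  induction k with
  | zero =>
    rintro r a t hr h0 h1 ⟨p, hp⟩
    exact Good_Q_coprime q hq h3 r a t hr h0 h1 p (by simpa using hp)
  | succ k ih =>
    rintro r a t hr h0 h1 ⟨p, hp⟩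
    have hr3 : 0 < r / 3 := by positivity
    rcases lt_trichotomy (3 * t) 1 with h | h | h
    · rw [Q_split1]
      have := fun a => ih (r / 3) a (3 * t) hr3 (by linarith) h.le ⟨p, by rw [← hp]; ring⟩
      exact (this _).union (this _) (r / 3 * (1 - 3 * t)) (mul_pos hr3 (by linarith))
        (fun _ hx _ hy => Q_sep1 hr3 (by linarith) hx hy)
    · have hr9 : 0 < r / 3 / 3 := by positivity
      have hK : ∀ a, Good (Q (r/3/3) a 1) := fun a =>
        Good_Q_coprime q hq h3 _ a 1 hr9 one_pos le_rfl q (by simp)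
      have hE : Q r a t = Q (r/3/3) a 11 ∪ (Q (r/3/3) (a + r/3/3*2) 1 ∪
          (Q (r/3/3) (a + r/3/3*5) 1 ∪ Q (r/3/3) (a + r/3/3*8) 1)) := by
        have ht : t = 1 / 3 := by linarith
        subst ht
        rw [Q_split1, Q_split, Q_split]
        unfold Q
        ring_nf
        ext x; simp only [Set.mem_union]; tauto
      rw [hE]
      generalize r/3/3 = ρ at *
      have bd : ∀ a x, x ∈ Q ρ a 1 → a ≤ x ∧ x ≤ a + 2 * ρ := by
        intro a x hx
        rcases hx with hx | hx <;> have := P_bd hr9 hx <;> constructor <;> linarith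
      refine (Good_Q_far _ _ _ hr9 (by norm_num)).union ((hK _).union ((hK _).union (hK _) ρ hr9 ?_)
        ρ hr9 ?_) ρ hr9 ?_
      · intro x hx y hy
        have := bd _ _ hx
        have := bd _ _ hy
        rw [abs_sub_comm]
        refine le_trans ?_ (le_abs_self _)
        linarith
      · intro x hx y hy
        have := bd _ _ hx
        have : a + ρ * 5 ≤ y := by
          rcases hy with hy | hy <;> have := bd _ _ hy <;> linarith
        rw [abs_sub_comm]
        refine le_trans ?_ (le_abs_self _)
        linarith
      · intro x hx y hy
        have : a + ρ * 2 ≤ y ∧ y ≤ a + ρ * 10 := by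
          rcases hy with hy | hy | hy <;> have := bd _ _ hy <;> constructor <;> linarith
        rcases hx with hx | hx
        · have := P_bd hr9 hx
          rw [abs_sub_comm]
          refine le_trans ?_ (le_abs_self _)
          linarith
        · have := P_bd hr9 hx
          refine le_trans ?_ (le_abs_self _)
          linarith
    rcases lt_trichotomy (3 * t) 2 with h' | h' | h'
    · rw [Q_split2]
      refine (Good_Q_far _ _ _ hr3 (by linarith)).union (ih _ _ _ hr3 (by linarith) (by linarith)
        ⟨2 * 3 ^ k * q - p, by push_cast; rw [← hp]; ring⟩) (r / 3 * (3 * t - 1))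
        (mul_pos hr3 (by linarith)) ?_
      intro x hx y hy
      exact Q_sep2 hr3 (by linarith) (by linarith) (by linarith) hx hy
    · rw [Q_split3]
      have hz : Q (r/3) (a + r/3*2) (3*t-2) = P (r/3) (a + r/3*2) := by
        unfold Q; rw [h']; simp
      refine (Good_Q_far _ _ _ hr3 (by linarith)).union (by rw [hz]; exact Good_P _ _ hr3)
        (r / 3 * 1) (by positivity) ?_
      intro x hx y hy
      exact Q_sep2 hr3 (by linarith) (by linarith) (by linarith) hx hy
    · rw [Q_split3]
      refine (Good_Q_far _ _ _ hr3 (by linarith)).union (ih _ _ _ hr3 (by linarith) (by linarith)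
        ⟨p - 2 * 3 ^ k * q, by push_cast; rw [← hp]; ring⟩) (r / 3 * 1)
        (by positivity) ?_
      intro x hx y hy
      exact Q_sep2 hr3 (by linarith) (by linarith) (by linarith) hx hy

end CantorUnion

theorem stmt8 (α : ℚ) (h0 : 0 < α) (h1 : α ≤ 1) :
    LipschitzEquivalent (cantorSet ∪ (fun x => x + (α : ℝ)) '' cantorSet) cantorSet := by
  obtain ⟨k, q, hq3, hq⟩ := Nat.exists_eq_pow_mul_and_not_dvd (n := α.den) α.den_nz 3 (by norm_num)
  have hqpos : 0 < q := by
    rcases Nat.eq_zero_or_pos q with h | h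
    · subst h; simp at hq3
    · exact h
  have hC : cantorSet = CantorUnion.P 1 0 := by simp [CantorUnion.P]
  have hU : cantorSet ∪ (fun x => x + (α : ℝ)) '' cantorSet = CantorUnion.Q 1 0 α := by
    simp [CantorUnion.P, CantorUnion.Q]
  rw [hU, hC]
  refine CantorUnion.Good.equiv ?_ (CantorUnion.Good_P 1 0 one_pos)
  refine CantorUnion.Good_Q q hqpos hq3 k 1 0 α one_pos (by exact_mod_cast h0)
    (by exact_mod_cast h1) ⟨α.num, ?_⟩
  have h := Rat.den_mul_eq_num α
  rw [hq] at h
  exact_mod_cast h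
end

section
/- Let N ≥ 2 and ℓ ≥ 1 be integers. Let X be the set of all finite words over the alphabet {1,…,N} (including the empty word o), with tree distance d(x, y) = |x| + |y| − 2·|x ∧ y|, where |x| is the length of x and x ∧ y is the longest common prefix of x and y. Let X̂ be the union of ℓ copies of X: its vertex set is {ô} ∪ ({1,…,ℓ} × X), with distance d̂ defined by d̂(ô, (i, u)) = |u| + 1, d̂((i, u), (i, v)) = d(u, v), and d̂((i, u), (j, v)) = |u| + |v| + 2 for i ≠ j. Then there exists a bijection σ from X ∖ {o} onto X̂ ∖ {ô} such that |d̂(σ(x), σ(y)) − d(x, y)| ≤ ⌊ℓ/N⌋ + 1 for all x, y ∈ X ∖ {o}. -/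
/-- Length of the longest common prefix of two lists. -/
def lcpLen {α : Type*} [DecidableEq α] : List α → List α → ℕ
  | a :: x, b :: y => if a = b then lcpLen x y + 1 else 0
  | _, _ => 0

/-- The graph distance in the rooted tree of finite words:
`d(x, y) = |x| + |y| - 2 |x ∧ y|`, where `x ∧ y` is the longest common prefix. -/
def treeDist {α : Type*} [DecidableEq α] (x y : List α) : ℕ :=
  x.length + y.length - 2 * lcpLen x y

/-- The distance on the union `X̂` of `ℓ` copies of the tree `X` of finite words
over `Fin N`, joined at a new root `ô = none`. -/
def unionDist {N ℓ : ℕ} :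
    Option (Fin ℓ × List (Fin N)) → Option (Fin ℓ × List (Fin N)) → ℕ
  | none, none => 0
  | none, some (_, u) => u.length + 1
  | some (_, u), none => u.length + 1
  | some (i, u), some (j, v) =>
      if i = j then treeDist u v else u.length + v.length + 2

theorem td_nil_left {α : Type*} [DecidableEq α] (y : List α) : treeDist [] y = y.length := by
  simp [treeDist, lcpLen]

theorem td_nil_right {α : Type*} [DecidableEq α] (y : List α) : treeDist y [] = y.length := by
  cases y <;> simp [treeDist, lcpLen]

theorem td_cons_same {α : Type*} [DecidableEq α] (a : α) (x y : List α) :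
    treeDist (a :: x) (a :: y) = treeDist x y := by
  simp [treeDist, lcpLen]; omega

theorem td_cons_ne {α : Type*} [DecidableEq α] {a b : α} (h : a ≠ b) (x y : List α) :
    treeDist (a :: x) (b :: y) = x.length + y.length + 2 := by
  simp [treeDist, lcpLen, h]; omega

theorem td_comm {α : Type*} [DecidableEq α] (x y : List α) : treeDist x y = treeDist y x := by
  induction x generalizing y with
  | nil => rw [td_nil_left, td_nil_right]
  | cons a x ih =>
    cases y with
    | nil => rw [td_nil_left, td_nil_right]
    | cons b y =>
      by_cases h : a = b
      · subst h; rw [td_cons_same, td_cons_same, ih]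
      · rw [td_cons_ne h, td_cons_ne (Ne.symm h)]; omega

/-- forest distance -/
def fdist {N : ℕ} {I : Type} [DecidableEq I] (p q : I × List (Fin N)) : ℕ :=
  if p.1 = q.1 then treeDist p.2 q.2 else p.2.length + q.2.length + 2

theorem fdist_comm {N : ℕ} {I : Type} [DecidableEq I] (p q : I × List (Fin N)) :
    fdist p q = fdist q p := by
  unfold fdist
  by_cases h : p.1 = q.1
  · rw [if_pos h, if_pos h.symm, td_comm]
  · rw [if_neg h, if_neg (Ne.symm h)]; omega

/-- two forests are similar with distortion at most `D` -/
def Sim (N : ℕ) (I J : Type) [DecidableEq I] [DecidableEq J] (D : ℕ) : Prop :=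
  ∃ e : I × List (Fin N) ≃ J × List (Fin N),
    ∀ x y, fdist (e x) (e y) ≤ fdist x y + D ∧ fdist x y ≤ fdist (e x) (e y) + D

section
variable {N : ℕ} {I J K : Type} [DecidableEq I] [DecidableEq J] [DecidableEq K]

theorem Sim.symm {D : ℕ} (h : Sim N I J D) : Sim N J I D := by
  obtain ⟨e, he⟩ := h
  refine ⟨e.symm, fun x y => ?_⟩
  have := he (e.symm x) (e.symm y)
  simp only [Equiv.apply_symm_apply] at this
  omega

theorem Sim.trans {D D' : ℕ} (h : Sim N I J D) (h' : Sim N J K D') : Sim N I K (D + D') := by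
  obtain ⟨e, he⟩ := h
  obtain ⟨e', he'⟩ := h'
  refine ⟨e.trans e', fun x y => ?_⟩
  have := he x y
  have := he' (e x) (e y)
  simp only [Equiv.trans_apply]
  omega

theorem Sim.mono {D D' : ℕ} (h : Sim N I J D) (hD : D ≤ D') : Sim N I J D' := by
  obtain ⟨e, he⟩ := h
  refine ⟨e, fun x y => ?_⟩
  have := he x y
  omega

theorem Sim.ofEquiv (f : I ≃ J) : Sim N I J 0 := by
  refine ⟨Equiv.prodCongr f (Equiv.refl _), fun x y => ?_⟩
  simp [fdist]

/-- shift along the ray of letter `z` -/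
def shf (z : Fin N) (P : Finset (Fin N)) : List (Fin N) → List (Fin N)
  | [] => []
  | j :: w => if j = z then z :: shf z P w else if j ∈ P then z :: j :: w else j :: w

theorem shf_z (z : Fin N) (P : Finset (Fin N)) (w) : shf z P (z :: w) = z :: shf z P w := by
  simp [shf]

theorem shf_in {z : Fin N} {P : Finset (Fin N)} (hz : z ∉ P) {j} (hj : j ∈ P) (w) :
    shf z P (j :: w) = z :: j :: w := by
  have : j ≠ z := by rintro rfl; exact hz hj
  simp [shf, this, hj]

theorem shf_out {z : Fin N} {P : Finset (Fin N)} {j} (hjz : j ≠ z) (hj : j ∉ P) (w) :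
    shf z P (j :: w) = j :: w := by
  simp [shf, hjz, hj]

theorem shf_empty (z : Fin N) (w) : shf z ∅ w = w := by
  induction w with
  | nil => rfl
  | cons j w ih =>
    by_cases h : j = z
    · subst h; rw [shf_z, ih]
    · rw [shf_out h (by simp)]

theorem shf_cases (z : Fin N) (P : Finset (Fin N)) (hz : z ∉ P) (j : Fin N) :
    j = z ∨ j ∈ P ∨ (j ≠ z ∧ j ∉ P) := by tauto

theorem shf_len (z : Fin N) (P : Finset (Fin N)) (hz : z ∉ P) (w) :
    w.length ≤ (shf z P w).length ∧ (shf z P w).length ≤ w.length + 1 := by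
  induction w with
  | nil => simp [shf]
  | cons j w ih =>
    rcases shf_cases z P hz j with rfl | h | ⟨h, h'⟩
    · rw [shf_z]; simpa using ih
    · rw [shf_in hz h]; simp
    · rw [shf_out h h']; simp

theorem shf_head (z : Fin N) (P : Finset (Fin N)) (hz : z ∉ P) (w) (j) (hj : j ∈ P) (v) :
    shf z P w ≠ j :: v := by
  have hjz : z ≠ j := by rintro rfl; exact hz hj
  cases w with
  | nil => simp [shf]
  | cons i w =>
    rcases shf_cases z P hz i with rfl | h | ⟨h, h'⟩
    · rw [shf_z]; simp [hjz]
    · rw [shf_in hz h]; simp [hjz]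
    · rw [shf_out h h']; simp only [ne_eq, List.cons.injEq, not_and]; rintro rfl; exact absurd hj h'

theorem shf_td_head (z : Fin N) (P : Finset (Fin N)) (hz : z ∉ P) (w) (j) (hj : j ∈ P) (v) :
    treeDist (shf z P w) (j :: v) = (shf z P w).length + v.length + 1 := by
  have h := shf_head z P hz w j hj
  cases hw : shf z P w with
  | nil => rw [td_nil_left]; simp
  | cons i u =>
    have : i ≠ j := by rintro rfl; exact h u hw
    rw [td_cons_ne this]; simp; omega

theorem shf_inj (z : Fin N) (P : Finset (Fin N)) (hz : z ∉ P) (u v)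
    (h : shf z P u = shf z P v) : u = v := by
  induction u generalizing v with
  | nil =>
    cases v with
    | nil => rfl
    | cons j v =>
      have := (shf_len z P hz (j :: v)).1
      rw [← h] at this; simp [shf] at this
  | cons i u ih =>
    cases v with
    | nil =>
      have := (shf_len z P hz (i :: u)).1
      rw [h] at this; simp [shf] at this
    | cons j v =>
      rcases shf_cases z P hz i with rfl | hi | ⟨hi, hi'⟩ <;>
      rcases shf_cases _ P hz j with hj | hj | ⟨hj, hj'⟩
      · subst hj
        rw [shf_z, shf_z] at h
        rw [ih v (List.cons.inj h).2]
      · rw [shf_z, shf_in hz hj] at h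
        exact absurd (List.cons.inj h).2 (shf_head _ P hz _ _ hj _)
      · rw [shf_z, shf_out hj hj'] at h
        exact absurd (List.cons.inj h).1.symm hj
      · subst hj
        rw [shf_z, shf_in hz hi] at h
        exact absurd (List.cons.inj h).2.symm (shf_head _ P hz _ _ hi _)
      · rw [shf_in hz hi, shf_in hz hj] at h
        exact (List.cons.inj h).2
      · rw [shf_in hz hi, shf_out hj hj'] at h
        exact absurd (List.cons.inj h).1.symm hj
      · subst hj
        rw [shf_z, shf_out hi hi'] at h
        exact absurd (List.cons.inj h).1 hi
      · rw [shf_out hi hi', shf_in hz hj] at h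
        exact absurd (List.cons.inj h).1 hi
      · rwa [shf_out hi hi', shf_out hj hj'] at h

theorem shf_surj (z : Fin N) (P : Finset (Fin N)) (hz : z ∉ P) (w) :
    (∃ j ∈ P, ∃ v, w = j :: v) ∨ ∃ u, shf z P u = w := by
  induction w with
  | nil => exact Or.inr ⟨[], rfl⟩
  | cons i w ih =>
    rcases shf_cases z P hz i with rfl | h | ⟨h, h'⟩
    · rcases ih with ⟨j, hj, v, rfl⟩ | ⟨u, rfl⟩
      · exact Or.inr ⟨j :: v, shf_in hz hj v⟩
      · exact Or.inr ⟨i :: u, shf_z _ _ _⟩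
    · exact Or.inl ⟨i, h, w, rfl⟩
    · exact Or.inr ⟨i :: w, shf_out h h' w⟩

theorem shf_td (z : Fin N) (P : Finset (Fin N)) (hz : z ∉ P) (u v) :
    treeDist (shf z P u) (shf z P v) ≤ treeDist u v + 1 ∧
    treeDist u v ≤ treeDist (shf z P u) (shf z P v) + 1 := by
  induction u generalizing v with
  | nil =>
    have := shf_len z P hz v
    simp only [shf, td_nil_left]; omega
  | cons i u ih =>
    cases v with
    | nil =>
      have := shf_len z P hz (i :: u)
      simp only [shf.eq_1, td_nil_right]; omega
    | cons j v =>
      by_cases hij : i = j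
      · subst hij
        rcases shf_cases z P hz i with rfl | hi | ⟨hi, hi'⟩
        · simp only [shf_z, td_cons_same]; exact ih v
        · simp only [shf_in hz hi, td_cons_same]; omega
        · simp only [shf_out hi hi', td_cons_same]; omega
      · rw [td_cons_ne hij]
        have hu := shf_len z P hz u
        have hv := shf_len z P hz v
        rcases shf_cases z P hz i with rfl | hi | ⟨hi, hi'⟩ <;>
        rcases shf_cases _ P hz j with hj | hj | ⟨hj, hj'⟩
        · exact absurd hj.symm hij
        · rw [shf_z, shf_in hz hj, td_cons_same, shf_td_head _ P hz _ _ hj]; omega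
        · rw [shf_z, shf_out hj hj', td_cons_ne hij]; omega
        · subst hj
          rw [shf_z, shf_in hz hi, td_cons_same, td_comm, shf_td_head _ P hz _ _ hi]; omega
        · rw [shf_in hz hi, shf_in hz hj, td_cons_same, td_cons_ne hij]; omega
        · rw [shf_in hz hi, shf_out hj hj', td_cons_ne (Ne.symm hj)]; simp; omega
        · subst hj
          rw [shf_z, shf_out hi hi', td_cons_ne hij]; omega
        · rw [shf_out hi hi', shf_in hz hj, td_cons_ne hi]; simp; omega
        · rw [shf_out hi hi', shf_out hj hj', td_cons_ne hij]; omega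

/-- the letters moved in the tree `t` -/
def slc (S : Finset (I × Fin N)) (t : I) : Finset (Fin N) :=
  Finset.univ.filter fun j => (t, j) ∈ S

theorem mem_slc (S : Finset (I × Fin N)) (t : I) (j) : j ∈ slc S t ↔ (t, j) ∈ S := by
  simp [slc]

/-- the map of forests -/
def phi (z : Fin N) (S : Finset (I × Fin N)) : (I ⊕ S) × List (Fin N) → I × List (Fin N)
  | (Sum.inl t, w) => (t, shf z (slc S t) w)
  | (Sum.inr p, w) => (p.1.1, p.1.2 :: w)

theorem phi_bij (z : Fin N) (S : Finset (I × Fin N)) (hz : ∀ t, (t, z) ∉ S) :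
    Function.Bijective (phi z S) := by
  have hz' : ∀ t, z ∉ slc S t := fun t => by rw [mem_slc]; exact hz t
  constructor
  · rintro ⟨t | ⟨⟨t, j⟩, hp⟩, u⟩ ⟨t' | ⟨⟨t', j'⟩, hp'⟩, v⟩ h
    · simp only [phi, Prod.mk.injEq] at h
      obtain ⟨rfl, h⟩ := h
      rw [shf_inj z _ (hz' _) _ _ h]
    · simp only [phi, Prod.mk.injEq] at h
      obtain ⟨rfl, h⟩ := h
      exact absurd h (shf_head z _ (hz' _) _ _ ((mem_slc _ _ _).2 hp') _)
    · simp only [phi, Prod.mk.injEq] at h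
      obtain ⟨rfl, h⟩ := h
      exact absurd h.symm (shf_head z _ (hz' _) _ _ ((mem_slc _ _ _).2 hp) _)
    · simp only [phi, Prod.mk.injEq, List.cons.injEq] at h
      obtain ⟨rfl, rfl, rfl⟩ := h
      rfl
  · rintro ⟨t, w⟩
    rcases shf_surj z _ (hz' t) w with ⟨j, hj, v, rfl⟩ | ⟨u, rfl⟩
    · exact ⟨(Sum.inr ⟨(t, j), (mem_slc _ _ _).1 hj⟩, v), rfl⟩
    · exact ⟨(Sum.inl t, u), rfl⟩

/-- base tree of a point -/
theorem phi_len (z : Fin N) (S : Finset (I × Fin N)) (hz : ∀ t, (t, z) ∉ S) (x) :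
    x.2.length ≤ (phi z S x).2.length ∧ (phi z S x).2.length ≤ x.2.length + 1 ∧
    ((∀ j, ((phi z S x).1, j) ∉ S) → (phi z S x).2.length = x.2.length) := by
  have hz' : ∀ t, z ∉ slc S t := fun t => by rw [mem_slc]; exact hz t
  obtain ⟨t | ⟨⟨t, j⟩, hp⟩, u⟩ := x
  · have := shf_len z _ (hz' t) u
    refine ⟨this.1, this.2, fun h => ?_⟩
    have h0 : slc S t = ∅ := by
      ext j; rw [mem_slc]; simpa [phi] using h j
    simp only [phi, h0, shf_empty]
  · simp only [phi]
    refine ⟨by simp, by simp, fun h => absurd hp (h j)⟩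

theorem phi_dist (z : Fin N) (S : Finset (I × Fin N)) (hz : ∀ t, (t, z) ∉ S) (D : ℕ)
    (hD : D = 2 ∨ D = 1 ∧ ∃ t0, ∀ p ∈ S, p.1 = t0) (x y) :
    fdist (phi z S x) (phi z S y) ≤ fdist x y + D ∧
    fdist x y ≤ fdist (phi z S x) (phi z S y) + D := by
  have hz' : ∀ t, z ∉ slc S t := fun t => by rw [mem_slc]; exact hz t
  have hD1 : 1 ≤ D := by omega
  by_cases hxy : (phi z S x).1 = (phi z S y).1
  · suffices fdist (phi z S x) (phi z S y) ≤ fdist x y + 1 ∧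
      fdist x y ≤ fdist (phi z S x) (phi z S y) + 1 by omega
    have key : ∀ (t : I) (j : Fin N) (hp : (t, j) ∈ S) (u v : List (Fin N)),
        fdist (phi z S (Sum.inl t, u)) (phi z S (Sum.inr ⟨(t, j), hp⟩, v))
          ≤ fdist ((Sum.inl t : I ⊕ S), u) (Sum.inr ⟨(t, j), hp⟩, v) + 1 ∧
        fdist ((Sum.inl t : I ⊕ S), u) (Sum.inr ⟨(t, j), hp⟩, v) ≤
          fdist (phi z S (Sum.inl t, u)) (phi z S (Sum.inr ⟨(t, j), hp⟩, v)) + 1 := by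
      intro t j hp u v
      have := shf_len z _ (hz' t) u
      simp only [phi, fdist, if_true, reduceCtorEq, if_false]
      rw [shf_td_head z _ (hz' t) _ _ ((mem_slc _ _ _).2 hp)]
      omega
    obtain ⟨t | ⟨⟨t, j⟩, hp⟩, u⟩ := x <;> obtain ⟨t' | ⟨⟨t', j'⟩, hp'⟩, v⟩ := y <;>
      simp only [phi] at hxy <;> subst hxy
    · simpa [phi, fdist] using shf_td z _ (hz' t) u v
    · exact key _ _ _ _ _
    · rw [fdist_comm (phi z S _), fdist_comm (Sum.inr _, _)]
      exact key _ _ _ _ _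
    · by_cases hj : j = j'
      · subst hj
        simp [phi, fdist, td_cons_same]
      · simp [phi, fdist, td_cons_ne hj, hj]
  · have hne : x.1 ≠ y.1 := by
      intro h
      apply hxy
      obtain ⟨a, u⟩ := x
      obtain ⟨b, v⟩ := y
      simp only at h
      subst h
      cases a <;> rfl
    have hx := phi_len z S hz x
    have hy := phi_len z S hz y
    unfold fdist
    rw [if_neg hxy, if_neg hne]
    rcases hD with rfl | ⟨rfl, t0, ht0⟩
    · omega
    · by_cases h0 : (phi z S x).1 = t0
      · have := hy.2.2 (fun j hj => hxy (h0.trans (ht0 _ hj).symm))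
        omega
      · have := hx.2.2 (fun j hj => h0 (ht0 _ hj))
        omega

theorem sim_phi (z : Fin N) (S : Finset (I × Fin N)) (hz : ∀ t, (t, z) ∉ S) (D : ℕ)
    (hD : D = 2 ∨ D = 1 ∧ ∃ t0, ∀ p ∈ S, p.1 = t0) : Sim N (I ⊕ S) I D :=
  ⟨Equiv.ofBijective _ (phi_bij z S hz), fun x y => phi_dist z S hz D hD x y⟩

end

theorem sim_S {N k k' : ℕ} (z : Fin N) (T : Finset (Fin k × Fin N)) (hz : ∀ t, (t, z) ∉ T)
    (D : ℕ) (hD : D = 2 ∨ D = 1 ∧ ∃ t0, ∀ p ∈ T, p.1 = t0) (h : k ≤ k')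
    (h' : k' - k ≤ T.card) : Sim N (Fin k) (Fin k') D := by
  obtain ⟨S, hS, hc⟩ := Finset.exists_subset_card_eq h'
  have h1 : Sim N (Fin k ⊕ S) (Fin k) D := by
    refine sim_phi z S (fun t ht => hz t (hS ht)) D ?_
    rcases hD with h | ⟨h, t0, ht⟩
    · exact Or.inl h
    · exact Or.inr ⟨h, t0, fun p hp => ht p (hS hp)⟩
  have e : (Fin k ⊕ S) ≃ Fin k' := by
    apply Fintype.equivFinOfCardEq
    simp [hc]; omega
  have h2 := h1.symm.trans (Sim.ofEquiv (N := N) e)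
  simpa using h2

theorem sim_one {N k k' : ℕ} (hN : 1 ≤ N) (hk : 1 ≤ k) (h : k ≤ k') (h' : k' + 1 ≤ k + N) :
    Sim N (Fin k) (Fin k') 1 := by
  refine sim_S (⟨0, hN⟩ : Fin N) (({⟨0, hk⟩} : Finset (Fin k)) ×ˢ (Finset.univ.erase ⟨0, hN⟩))
    (fun t ht => by simp at ht; exact ht.1 ht.2.symm) 1 (Or.inr ⟨rfl, ⟨0, hk⟩, ?_⟩) h ?_
  · rintro p hp
    simp only [Finset.mem_product, Finset.mem_singleton] at hp
    exact hp.1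
  · simp [Finset.card_product]; omega

theorem sim_two {N k k' : ℕ} (hN : 1 ≤ N) (h : k ≤ k') (h' : k' ≤ k * N) :
    Sim N (Fin k) (Fin k') 2 := by
  refine sim_S (⟨0, hN⟩ : Fin N) ((Finset.univ : Finset (Fin k)) ×ˢ (Finset.univ.erase ⟨0, hN⟩))
    (by simp) 2 (Or.inl rfl) h ?_
  simp [Finset.card_product, Nat.mul_sub]; omega

theorem sim_main (N : ℕ) (hN : 2 ≤ N) (ℓ : ℕ) (hℓ : 1 ≤ ℓ) :
    Sim N (Fin N) (Fin ℓ) (ℓ / N + 1) := by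
  induction ℓ using Nat.strong_induction_on with
  | _ ℓ ih =>
  have hN1 : 1 ≤ N := by omega
  have hq : ∀ c, c * N ≤ ℓ → c ≤ ℓ / N := fun c h => (Nat.le_div_iff_mul_le (by omega)).2 h
  by_cases h1 : ℓ < N
  · exact (sim_one hN1 hℓ h1.le (by omega)).symm.mono (Nat.le_add_left _ _)
  by_cases h2 : ℓ < 2 * N
  · exact (sim_one hN1 hN1 (by omega) (by omega)).mono (Nat.le_add_left _ _)
  by_cases h3 : ℓ < 3 * N
  · refine ((sim_one (k' := 2 * N - 1) hN1 hN1 (by omega) (by omega)).trans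
      (sim_two hN1 (by omega) ?_)).mono ?_
    · have : (2 * N - 1) * 2 ≤ (2 * N - 1) * N := Nat.mul_le_mul_left _ hN
      omega
    · have := hq 2 (by omega)
      omega
  by_cases h4 : ℓ < 4 * N
  · refine ((sim_two (k' := 2 * N) hN1 (by omega) (by nlinarith)).trans
      (sim_two hN1 (by omega) ?_)).mono ?_
    · nlinarith
    · have := hq 3 (by omega)
      omega
  · have h5 := ih (ℓ - 2 * N) (by omega) (by omega)
    refine (h5.trans (sim_two hN1 (by omega) ?_)).mono ?_
    · have : (ℓ - 2 * N) * 2 ≤ (ℓ - 2 * N) * N := Nat.mul_le_mul_left _ hN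
      omega
    · have : ℓ / N = (ℓ - 2 * N) / N + 2 := by
        conv_lhs => rw [show ℓ = (ℓ - 2 * N) + 2 * N by omega]
        rw [Nat.add_mul_div_right _ _ (by omega)]
      omega

theorem stmt15 (N ℓ : ℕ) (hN : 2 ≤ N) (hℓ : 1 ≤ ℓ) :
    ∃ σ : {x : List (Fin N) // x ≠ []} →
          {y : Option (Fin ℓ × List (Fin N)) // y ≠ none},
      Function.Bijective σ ∧
      ∀ x y : {x : List (Fin N) // x ≠ []},
        |(unionDist (σ x).val (σ y).val : ℤ) - (treeDist x.val y.val : ℤ)| ≤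
          ((ℓ / N : ℕ) : ℤ) + 1 := by
  obtain ⟨e, he⟩ := sim_main N hN ℓ hℓ
  refine ⟨fun x => ⟨some (e (x.1.head x.2, x.1.tail)), by simp⟩, ⟨?_, ?_⟩, ?_⟩
  · rintro ⟨x, hx⟩ ⟨y, hy⟩ h
    simp only [Subtype.mk.injEq, Option.some.injEq, EmbeddingLike.apply_eq_iff_eq,
      Prod.mk.injEq] at h
    apply Subtype.ext
    show x = y
    rw [← List.cons_head_tail hx, ← List.cons_head_tail hy, h.1, h.2]
  · rintro ⟨y, hy⟩
    obtain ⟨p, rfl⟩ := Option.ne_none_iff_exists'.1 hy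
    refine ⟨⟨(e.symm p).1 :: (e.symm p).2, by simp⟩, ?_⟩
    simp
  · rintro ⟨x, hx⟩ ⟨y, hy⟩
    obtain ⟨a, u, rfl⟩ := List.exists_cons_of_ne_nil hx
    obtain ⟨b, v, rfl⟩ := List.exists_cons_of_ne_nil hy
    have h := he (a, u) (b, v)
    have h1 : fdist (a, u) (b, v) = treeDist (a :: u) (b :: v) := by
      unfold fdist
      by_cases hab : a = b
      · subst hab; simp [td_cons_same]
      · simp [hab, td_cons_ne hab]
    have h2 : unionDist (some (e (a, u))) (some (e (b, v))) = fdist (e (a, u)) (e (b, v)) := rfl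
    simp only [List.head_cons, List.tail_cons]
    rw [h2, ← h1, abs_le]
    omega
end
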